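/- Fix an integer k ≥ 1 and a : Fin k → ℂ with Im(a j) ≥ 0 for every j and k·(a j) ∈ ℤ for at least one j. Let Ω := {z : Fin k → ℂ : for every j, (j+1) + z j is not a real number ≤ 0}. Then there exists a function G : (Fin k → ℂ) × ℂ → ℂ that is analytic on Ω × ℂ, satisfies G(z, s) = (s − 1) · Σ_{n=1}^∞ exp(2πi·n·a_{ι(n)}) · (n + z_{ι(n)})^{−s} (principal-branch powers) for every z ∈ Ω and every s with Re s > 1, and satisfies G(z, 1) = (1/k)·Σ_{j ∈ Fin k, k·(a j) ∈ ℤ} exp(2πi·(j+1)·(a j)) for every z ∈ Ω. In other words, for every z ∈ Ω the function ζ_k(a, z, ·) extends meromorphically to ℂ with a single simple pole at s = 1 whose residue (1/k)·Σ_{a_j ∈ ℤ[1/k]} e^{2πi j a_j} is independent of z. -/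

import Mathlib

/-!
Splitting `n` into residue classes modulo `k` writes `ζ_k(a, z, s)` as a finite combination of
Lerch series `L(w, s) = ∑ lⁿ (w + n)⁻ˢ` with `l = exp (2πi k a_j)` and `w = (j + z_j) / k`, so
`‖l‖ ≤ 1`, and `l = 1` exactly when `k a_j` is an integer.

Since `∂L/∂w = -s L(w, s + 1)` and `L(w, s) = w⁻ˢ + l L(w + 1, s)`, integrating over the segment
from `w` to `w + 1` gives
`(1 - l) L(w, s) = w⁻ˢ - l s ∫₀¹ L(w + t, s + 1) dt`, and for `l = 1`, after an integration by
parts,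
`(s - 1) L(w, s) = w ^ (1 - s) + (s - 1) ∫₀¹ (1 - t) s L(w + t, s + 1) dt`.
In both cases `G = (s - 1) L` is determined at `s` by its values at `s + 1`, which continues it
step by step to all `s`; at `s = 1` the integral term drops out and leaves `G(w, 1)`, which is `0`
or `1`.

Joint analyticity in `(w, s)` comes from Osgood's lemma, proved here by applying Cauchy's formula to
holomorphic functions with values in the Banach space `C(X, E)`.
-/

open Complex MeasureTheory Set Filter Topology Metric

theorem exists_continuousOn_curry {X Y Z : Type*} [TopologicalSpace X] [TopologicalSpace Y]
    [TopologicalSpace Z] [Nonempty Z] {U : Set Y} {f : Y × X → Z}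
    (hf : ContinuousOn f (U ×ˢ univ)) :
    ∃ F : Y → C(X, Z), ContinuousOn F U ∧ ∀ y ∈ U, ∀ x, F y x = f (y, x) := by
  classical
  let g : C(U × X, Z) :=
    ⟨fun p => f (p.1, p.2), hf.comp_continuous (by fun_prop) fun p => ⟨p.1.2, mem_univ _⟩⟩
  let F : Y → C(X, Z) := fun y =>
    if hy : y ∈ U then g.curry ⟨y, hy⟩ else .const X (Classical.arbitrary Z)
  have hF : U.domRestrict F = g.curry := by
    ext y x
    simp [F, g]
  refine ⟨F, ?_, fun y hy x => by simp [F, g, hy]⟩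
  rw [continuousOn_iff_continuous_domRestrict, hF]
  exact g.curry.continuous

section CompactParameter

variable {X E : Type*} [TopologicalSpace X] [CompactSpace X]
  [NormedAddCommGroup E] [NormedSpace ℂ E]

theorem analyticOnNhd_of_forall_eval [CompleteSpace E] {U : Set ℂ} (hU : IsOpen U)
    {F : ℂ → C(X, E)} (hc : ContinuousOn F U)
    (hF : ∀ x, DifferentiableOn ℂ (fun z => F z x) U) : AnalyticOnNhd ℂ F U := by
  intro c hcU
  obtain ⟨r, hr, hrU⟩ := nhds_basis_closedBall.mem_iff.1 (hU.mem_nhds hcU)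
  lift r to NNReal using hr.le
  have hint : CircleIntegrable F c r :=
    (hc.mono (sphere_subset_closedBall.trans hrU)).circleIntegrable r.2
  have hcauchy : ∀ w ∈ ball c r,
      (2 * Real.pi * I : ℂ)⁻¹ • ∮ z in C(c, r), (z - w)⁻¹ • F z = F w := by
    intro w hw
    ext x
    have hker : CircleIntegrable (fun z => (z - w)⁻¹ • F z) c r :=
      ContinuousOn.circleIntegrable r.2 <|
        ((continuousOn_id.sub continuousOn_const).inv₀ fun z hz =>
          sub_ne_zero.2 (ne_of_mem_of_not_mem hz fun h => (mem_ball.1 hw).ne (mem_sphere.1 h))).smul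
          (hc.mono (sphere_subset_closedBall.trans hrU))
    have heval : (∮ z in C(c, r), (z - w)⁻¹ • F z) x = ∮ z in C(c, r), (z - w)⁻¹ • F z x := by
      simpa [circleIntegral] using
        ((ContinuousMap.evalCLM ℂ x).intervalIntegral_comp_comm hker.out).symm
    rw [ContinuousMap.smul_apply, heval]
    exact ((hF x).mono (closure_ball_subset_closedBall.trans hrU)).diffContOnCl
      |>.two_pi_i_inv_smul_circleIntegral_sub_inv_smul hw
  refine (hasFPowerSeriesOn_cauchy_integral hint hr).analyticAt.congr ?_
  filter_upwards [ball_mem_nhds c hr] with w hw using hcauchy w hw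

theorem exists_analyticOnNhd_curry [CompleteSpace E] {U : Set ℂ} (hU : IsOpen U)
    {f : ℂ × X → E} (hc : ContinuousOn f (U ×ˢ univ))
    (hf : ∀ x, DifferentiableOn ℂ (fun z => f (z, x)) U) :
    ∃ F : ℂ → C(X, E), AnalyticOnNhd ℂ F U ∧ ∀ z ∈ U, ∀ x, F z x = f (z, x) := by
  obtain ⟨F, hFc, hFf⟩ := exists_continuousOn_curry hc
  exact ⟨F, analyticOnNhd_of_forall_eval hU hFc fun x =>
    (hf x).congr fun z hz => hFf z hz x, hFf⟩

/-- Integration against a finite measure on `X` as a continuous linear functional on `C(X, E)`. -/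
noncomputable def integralContinuousMap [CompleteSpace E] [SecondCountableTopologyEither X E]
    [MeasurableSpace X] [BorelSpace X] (μ : Measure X) [IsFiniteMeasure μ] : C(X, E) →L[ℂ] E :=
  (L1.integralCLM' ℂ).comp (ContinuousMap.toLp 1 μ ℂ)

theorem integralContinuousMap_apply [CompleteSpace E] [SecondCountableTopologyEither X E]
    [MeasurableSpace X] [BorelSpace X] (μ : Measure X) [IsFiniteMeasure μ] (φ : C(X, E)) :
    integralContinuousMap μ φ = ∫ x, φ x ∂μ := by
  rw [integralContinuousMap, ContinuousLinearMap.comp_apply, ← L1.integral_eq',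
    L1.integral_eq_integral]
  exact integral_congr_ae (ContinuousMap.coeFn_toLp μ φ)

instance instIsBoundedSMulContinuousMap : IsBoundedSMul C(X, ℂ) C(X, E) :=
  .of_norm_smul_le fun φ ψ => (ContinuousMap.norm_le _ (by positivity)).2 fun x => by
    rw [ContinuousMap.smul_apply', norm_smul]
    gcongr
    exacts [φ.norm_coe_le_norm x, ψ.norm_coe_le_norm x]

instance instIsScalarTowerContinuousMap : IsScalarTower ℂ C(X, ℂ) C(X, E) :=
  ⟨fun c φ ψ => ContinuousMap.ext fun x => smul_assoc c (φ x) (ψ x)⟩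

end CompactParameter

section Osgood

variable {E : Type*} [NormedAddCommGroup E] [NormedSpace ℂ E] [CompleteSpace E]

theorem exists_clm_eq_intervalIntegral {a b : ℝ} (hab : a ≤ b) :
    ∃ L : C(Icc a b, E) →L[ℂ] E, ∀ (φ : C(Icc a b, E)) (f : ℝ → E), (∀ t, φ t = f t) →
      L φ = ∫ t in a..b, f t := by
  have hfin : IsFiniteMeasure (volume.comap ((↑) : Icc a b → ℝ)) := by
    refine ⟨?_⟩
    rw [comap_subtype_coe_apply measurableSet_Icc, image_univ, Subtype.range_coe]
    exact measure_Icc_lt_top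
  refine ⟨integralContinuousMap (volume.comap Subtype.val), fun φ f hφ => ?_⟩
  rw [integralContinuousMap_apply, integral_congr_ae (.of_forall hφ),
    integral_subtype_comap measurableSet_Icc f, integral_Icc_eq_integral_Ioc,
    intervalIntegral.integral_of_le hab]

theorem exists_analyticOnNhd_cauchyKernel (c : ℂ) (r : ℝ) :
    ∃ R : ℂ → C(Icc 0 (2 * Real.pi), ℂ), AnalyticOnNhd ℂ R (ball c r) ∧
      ∀ w ∈ ball c r, ∀ θ, R w θ =
        (2 * Real.pi * I)⁻¹ * (deriv (circleMap c r) θ * (circleMap c r θ - w)⁻¹) := by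
  have hne : ∀ w ∈ ball c r, ∀ θ, circleMap c r θ - w ≠ 0 := fun w hw θ =>
    sub_ne_zero.2 (circleMap_ne_mem_ball hw θ)
  refine exists_analyticOnNhd_curry isOpen_ball (f := fun p : ℂ × Icc 0 (2 * Real.pi) =>
    (2 * Real.pi * I)⁻¹ * (deriv (circleMap c r) p.2 * (circleMap c r p.2 - p.1)⁻¹)) ?_ fun θ => ?_
  · simp only [deriv_circleMap]
    refine continuousOn_const.mul (ContinuousOn.mul (by fun_prop) ?_)
    exact ContinuousOn.inv₀ (by fun_prop) fun p hp => hne p.1 hp.1 p.2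
  · have hd : DifferentiableOn ℂ (fun w => circleMap c r θ - w) (ball c r) := by fun_prop
    exact ((hd.fun_inv fun w hw => hne w hw θ).const_mul (deriv (circleMap c r) θ)).const_mul _

/-- **Osgood's lemma** in two variables. -/
theorem analyticOnNhd_of_differentiableOn_slices {U : Set (ℂ × ℂ)} (hU : IsOpen U)
    {f : ℂ × ℂ → E} (hc : ContinuousOn f U)
    (hfst : ∀ s, DifferentiableOn ℂ (fun w => f (w, s)) {w | (w, s) ∈ U})
    (hsnd : ∀ w, DifferentiableOn ℂ (fun s => f (w, s)) {s | (w, s) ∈ U}) :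
    AnalyticOnNhd ℂ f U := by
  rintro ⟨w₀, s₀⟩ hp
  obtain ⟨r, hr, hrU⟩ := nhds_basis_closedBall.mem_iff.1 (hU.mem_nhds hp)
  rw [← closedBall_prod_same] at hrU
  have hball : ball s₀ r ⊆ closedBall s₀ r := ball_subset_closedBall
  have hcircle : ∀ θ, circleMap w₀ r θ ∈ closedBall w₀ r := circleMap_mem_closedBall _ hr.le
  obtain ⟨L, hL⟩ := exists_clm_eq_intervalIntegral (E := E) Real.two_pi_pos.le
  obtain ⟨R, hRa, hR⟩ := exists_analyticOnNhd_cauchyKernel w₀ r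
  obtain ⟨Φ, hΦa, hΦ⟩ : ∃ Φ : ℂ → C(Icc 0 (2 * Real.pi), E), AnalyticOnNhd ℂ Φ (ball s₀ r) ∧
      ∀ s ∈ ball s₀ r, ∀ θ, Φ s θ = f (circleMap w₀ r θ, s) :=
    exists_analyticOnNhd_curry isOpen_ball
      (f := fun p : ℂ × Icc 0 (2 * Real.pi) => f (circleMap w₀ r p.2, p.1))
      (hc.comp (by fun_prop) fun p hp => hrU ⟨hcircle _, hball hp.1⟩)
      fun θ => (hsnd (circleMap w₀ r θ)).mono fun s hs => hrU ⟨hcircle _, hball hs⟩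
  have hcauchy : ∀ w ∈ ball w₀ r, ∀ s ∈ ball s₀ r, f (w, s) = L (R w • Φ s) := by
    intro w hw s hs
    have hd : DifferentiableOn ℂ (fun w => f (w, s)) (closedBall w₀ r) :=
      (hfst s).mono fun w hw => hrU ⟨hw, hball hs⟩
    rw [hL _ (fun θ => (2 * Real.pi * I : ℂ)⁻¹ • deriv (circleMap w₀ r) θ •
        (circleMap w₀ r θ - w)⁻¹ • f (circleMap w₀ r θ, s)), intervalIntegral.integral_smul]
    · exact ((hd.mono closure_ball_subset_closedBall).diffContOnCl
        |>.two_pi_i_inv_smul_circleIntegral_sub_inv_smul hw).symm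
    · intro θ
      rw [ContinuousMap.smul_apply', hR w hw, hΦ s hs, mul_smul, mul_smul]
  have hRp : AnalyticAt ℂ (fun p : ℂ × ℂ => R p.1) (w₀, s₀) :=
    (hRa w₀ (mem_ball_self hr)).comp analyticAt_fst
  have hΦp : AnalyticAt ℂ (fun p : ℂ × ℂ => Φ p.2) (w₀, s₀) :=
    (hΦa s₀ (mem_ball_self hr)).comp analyticAt_snd
  have han : AnalyticAt ℂ (fun p : ℂ × ℂ => L (R p.1 • Φ p.2)) (w₀, s₀) :=
    (L.analyticAt _).comp (hRp.smul hΦp)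
  refine han.congr ?_
  filter_upwards [prod_mem_nhds (ball_mem_nhds w₀ hr) (ball_mem_nhds s₀ hr)] with p hp
  exact (hcauchy p.1 hp.1 p.2 hp.2).symm

theorem analyticOnNhd_of_differentiableOn_curves {U : Set (ℂ × ℂ)} (hU : IsOpen U)
    {f : ℂ × ℂ → E} (hc : ContinuousOn f U)
    (hf : ∀ γ : ℂ → ℂ × ℂ, Differentiable ℂ γ → DifferentiableOn ℂ (f ∘ γ) (γ ⁻¹' U)) :
    AnalyticOnNhd ℂ f U :=
  analyticOnNhd_of_differentiableOn_slices hU hc (fun s => hf (·, s) (by fun_prop))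
    fun w => hf (w, ·) (by fun_prop)

theorem analyticOnNhd_intervalIntegral {U : Set (ℂ × ℂ)} (hU : IsOpen U) {a b : ℝ} (hab : a ≤ b)
    {f : ℂ × ℂ → ℝ → E} (hc : ContinuousOn (fun p : (ℂ × ℂ) × ℝ => f p.1 p.2) (U ×ˢ Icc a b))
    (hf : ∀ t ∈ Icc a b, DifferentiableOn ℂ (f · t) U) :
    AnalyticOnNhd ℂ (fun z => ∫ t in a..b, f z t) U := by
  obtain ⟨F, hFc, hF⟩ : ∃ F : ℂ × ℂ → C(Icc a b, E), ContinuousOn F U ∧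
      ∀ z ∈ U, ∀ t, F z t = f z t :=
    exists_continuousOn_curry (f := fun p : (ℂ × ℂ) × Icc a b => f p.1 p.2)
      (hc.comp (f := fun p : (ℂ × ℂ) × Icc a b => (p.1, (p.2 : ℝ))) (by fun_prop)
        fun p hp => ⟨hp.1, p.2.2⟩)
  have hFd : ∀ t, DifferentiableOn ℂ (fun z => F z t) U := fun t =>
    (hf t t.2).congr fun z hz => hF z hz t
  have hFa : AnalyticOnNhd ℂ F U :=
    analyticOnNhd_of_differentiableOn_curves hU hFc fun γ hγ =>
      (analyticOnNhd_of_forall_eval (hU.preimage hγ.continuous)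
        (hFc.comp hγ.continuous.continuousOn fun _ h => h)
        fun t => (hFd t).comp hγ.differentiableOn fun _ h => h).differentiableOn
  obtain ⟨L, hL⟩ := exists_clm_eq_intervalIntegral (E := E) hab
  exact (L.comp_analyticOnNhd hFa).congr hU fun z hz => hL _ _ (hF z hz)

theorem analyticOnNhd_tsum {ι : Type*} {U : Set (ℂ × ℂ)} (hU : IsOpen U) {F : ι → ℂ × ℂ → E}
    (hF : ∀ i, DifferentiableOn ℂ (F i) U) (hsum : SummableLocallyUniformlyOn F U) :
    AnalyticOnNhd ℂ (fun z => ∑' i, F i z) U := by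
  refine analyticOnNhd_of_differentiableOn_curves hU ?_ fun γ hγ => ?_
  · have hlim := hasSumLocallyUniformlyOn_iff_tendstoLocallyUniformlyOn.1
      hsum.hasSumLocallyUniformlyOn
    exact hlim.continuousOn <| .of_forall fun A =>
      continuousOn_finsetSum A fun i _ => (hF i).continuousOn
  · have hγU : IsOpen (γ ⁻¹' U) := hU.preimage hγ.continuous
    exact (hsum.comp γ (fun _ h => h) hγ.continuous.continuousOn).differentiableOn hγU
      fun i w hw => (((hF i) _ hw).differentiableAt (hU.mem_nhds hw)).comp w (hγ w)

theorem hasSum_deriv_of_summableLocallyUniformlyOn {ι : Type*} {U : Set ℂ} (hU : IsOpen U)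
    {f : ι → ℂ → E} (hf : ∀ i, DifferentiableOn ℂ (f i) U) (hsum : SummableLocallyUniformlyOn f U)
    {z : ℂ} (hz : z ∈ U) :
    HasSum (fun i => deriv (f i) z) (deriv (fun w => ∑' i, f i w) z) := by
  have hlim := ((hasSumLocallyUniformlyOn_iff_tendstoLocallyUniformlyOn.1
    hsum.hasSumLocallyUniformlyOn).deriv (.of_forall fun I => .fun_sum fun i _ => hf i)
    hU).tendsto_at hz
  refine hlim.congr fun I => ?_
  exact deriv_fun_sum fun i _ => (hf i).differentiableAt (hU.mem_nhds hz)

end Osgood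

section Continuation

theorem exists_analyticOnNhd_iUnion {𝕜 E F : Type*} [NontriviallyNormedField 𝕜]
    [NormedAddCommGroup E] [NormedSpace 𝕜 E] [NormedAddCommGroup F] [NormedSpace 𝕜 F]
    {U : ℕ → Set E} (hU : ∀ n, IsOpen (U n)) (hmono : Monotone U) {f : ℕ → E → F}
    (hf : ∀ n, AnalyticOnNhd 𝕜 (f n) (U n)) (heq : ∀ n, EqOn (f (n + 1)) (f n) (U n)) :
    ∃ g : E → F, AnalyticOnNhd 𝕜 g (⋃ n, U n) ∧ ∀ n, EqOn g (f n) (U n) := by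
  have hstable : ∀ m n, m ≤ n → EqOn (f n) (f m) (U m) := fun m n hmn => by
    induction n, hmn using Nat.le_induction with
    | base => exact eqOn_refl _ _
    | succ n hmn ih => exact ((heq n).mono (hmono hmn)).trans ih
  let g : E → F := fun x => f (sInf {n | x ∈ U n}) x
  have hg : ∀ n, EqOn g (f n) (U n) := fun n x hx => by
    have hmin : x ∈ U (sInf {n | x ∈ U n}) := Nat.sInf_mem (s := {n | x ∈ U n}) ⟨n, hx⟩
    exact (hstable _ n (Nat.sInf_le hx) hmin).symm
  refine ⟨g, fun x hx => ?_, hg⟩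
  obtain ⟨n, hn⟩ := mem_iUnion.1 hx
  exact (hf n x hn).congr ((hg n).symm.eventuallyEq_of_mem ((hU n).mem_nhds hn))

theorem add_ofReal_mem_slitPlane {w : ℂ} (hw : w ∈ slitPlane) {t : ℝ} (ht : 0 ≤ t) :
    w + t ∈ slitPlane := by
  rw [mem_slitPlane_iff] at hw ⊢
  simp only [add_re, ofReal_re, add_im, ofReal_im, add_zero]
  exact hw.imp_left fun h => by linarith

theorem add_natCast_mem_slitPlane {w : ℂ} (hw : w ∈ slitPlane) (n : ℕ) : w + n ∈ slitPlane := by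
  simpa using add_ofReal_mem_slitPlane hw n.cast_nonneg

/-- The pairs `(w, s)` with `w` off the branch cut of the powers and `b < Re s`. -/
def slitHalfSpace (b : ℝ) : Set (ℂ × ℂ) :=
  slitPlane ×ˢ {s | b < s.re}

theorem isOpen_slitHalfSpace (b : ℝ) : IsOpen (slitHalfSpace b) :=
  isOpen_slitPlane.prod (isOpen_lt continuous_const continuous_re)

theorem antitone_slitHalfSpace : Antitone slitHalfSpace := fun _ _ h =>
  prod_mono_right fun _ hs => h.trans_lt hs

theorem iUnion_slitHalfSpace_one_sub_natCast :
    ⋃ n : ℕ, slitHalfSpace (1 - n) = slitPlane ×ˢ univ := by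
  refine (iUnion_subset fun n => prod_mono_right (subset_univ _)).antisymm fun x hx => ?_
  obtain ⟨n, hn⟩ := exists_nat_gt (1 - x.2.re)
  exact mem_iUnion.2 ⟨n, hx.1, show 1 - (n : ℝ) < x.2.re by linarith⟩

theorem shift_mem_slitHalfSpace {b : ℝ} {x : ℂ × ℂ} (hx : x ∈ slitHalfSpace b) {t : ℝ}
    (ht : 0 ≤ t) : (x.1 + t, x.2 + 1) ∈ slitHalfSpace (b + 1) :=
  ⟨add_ofReal_mem_slitPlane hx.1 ht, by simpa using hx.2⟩

/-- The right-hand side of the functional equation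
`G(w, s) = A(w, s) + (s - 1) ∫₀¹ p(t) G(w + t, s + 1) dt`, which computes `G` at `s` from its values
one unit further to the right. -/
noncomputable def unitShift (A : ℂ × ℂ → ℂ) (p : ℝ → ℂ) (H : ℂ × ℂ → ℂ) (x : ℂ × ℂ) : ℂ :=
  A x + (x.2 - 1) * ∫ t in (0 : ℝ)..1, p t * H (x.1 + t, x.2 + 1)

variable {A G₀ : ℂ × ℂ → ℂ} {p : ℝ → ℂ}

theorem analyticOnNhd_unitShift (hA : AnalyticOnNhd ℂ A (slitPlane ×ˢ univ)) (hp : Continuous p)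
    {H : ℂ × ℂ → ℂ} {b : ℝ} (hH : AnalyticOnNhd ℂ H (slitHalfSpace (b + 1))) :
    AnalyticOnNhd ℂ (unitShift A p H) (slitHalfSpace b) := by
  have hshift : MapsTo (fun y : (ℂ × ℂ) × ℝ => (y.1.1 + y.2, y.1.2 + 1))
      (slitHalfSpace b ×ˢ Icc 0 1) (slitHalfSpace (b + 1)) :=
    fun y hy => shift_mem_slitHalfSpace hy.1 hy.2.1
  have hint : AnalyticOnNhd ℂ (fun x : ℂ × ℂ => ∫ t in (0 : ℝ)..1, p t * H (x.1 + t, x.2 + 1))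
      (slitHalfSpace b) := by
    refine analyticOnNhd_intervalIntegral (isOpen_slitHalfSpace b) zero_le_one
      (ContinuousOn.mul (by fun_prop) (hH.continuousOn.comp (by fun_prop) hshift)) fun t ht => ?_
    exact (hH.differentiableOn.comp (by fun_prop) fun x hx =>
      shift_mem_slitHalfSpace hx ht.1).const_mul _
  have hsub : AnalyticOnNhd ℂ (fun x : ℂ × ℂ => x.2 - 1) (slitHalfSpace b) := fun x _ =>
    analyticAt_snd.sub analyticAt_const
  exact (hA.mono (prod_mono_right (subset_univ _))).add (hsub.mul hint)

theorem eqOn_unitShift {H H' : ℂ × ℂ → ℂ} {b : ℝ} (h : EqOn H H' (slitHalfSpace (b + 1))) :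
    EqOn (unitShift A p H) (unitShift A p H') (slitHalfSpace b) := fun x hx => by
  simp only [unitShift]
  congr 2
  refine intervalIntegral.integral_congr fun t ht => ?_
  rw [uIcc_of_le zero_le_one] at ht
  simp only [h (shift_mem_slitHalfSpace hx ht.1)]

theorem exists_analyticOnNhd_of_eqOn_unitShift (hA : AnalyticOnNhd ℂ A (slitPlane ×ˢ univ))
    (hp : Continuous p) (hG₀ : AnalyticOnNhd ℂ G₀ (slitHalfSpace 1))
    (hfun : EqOn (unitShift A p G₀) G₀ (slitHalfSpace 1)) :
    ∃ G : ℂ × ℂ → ℂ, AnalyticOnNhd ℂ G (slitPlane ×ˢ univ) ∧ EqOn G G₀ (slitHalfSpace 1) ∧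
      ∀ w ∈ slitPlane, G (w, 1) = A (w, 1) := by
  let f : ℕ → ℂ × ℂ → ℂ := fun n => (unitShift A p)^[n] G₀
  have hf_succ : ∀ n, f (n + 1) = unitShift A p (f n) := fun n =>
    Function.iterate_succ_apply' _ _ _
  have hb : ∀ n : ℕ, (1 - (n + 1 : ℕ) : ℝ) + 1 = 1 - n := fun n => by push_cast; ring
  have hf : ∀ n : ℕ, AnalyticOnNhd ℂ (f n) (slitHalfSpace (1 - n)) := fun n => by
    induction n with
    | zero => simpa [f] using hG₀
    | succ n ih => exact hf_succ n ▸ analyticOnNhd_unitShift hA hp (by rwa [hb])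
  have heq : ∀ n : ℕ, EqOn (f (n + 1)) (f n) (slitHalfSpace (1 - n)) := fun n => by
    induction n with
    | zero => simpa [f] using hfun
    | succ n ih =>
      rw [hf_succ (n + 1), hf_succ n]
      exact eqOn_unitShift (by rwa [hb, ← hf_succ])
  obtain ⟨G, hGa, hG⟩ := exists_analyticOnNhd_iUnion (fun n : ℕ => isOpen_slitHalfSpace (1 - n))
    (fun m n hmn => antitone_slitHalfSpace (by gcongr)) hf heq
  rw [iUnion_slitHalfSpace_one_sub_natCast] at hGa
  refine ⟨G, hGa, by simpa [f] using hG 0, fun w hw => ?_⟩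
  rw [hG 1 ⟨hw, by simp⟩, hf_succ, unitShift]
  simp

end Continuation

section LerchSeries

theorem ofReal_mul_cpow {r : ℝ} (hr : 0 < r) {z : ℂ} (hz : z ≠ 0) (c : ℂ) :
    (r * z) ^ c = (r : ℂ) ^ c * z ^ c := by
  have hr' : (r : ℂ) ≠ 0 := ofReal_ne_zero.2 hr.ne'
  rw [cpow_def_of_ne_zero (mul_ne_zero hr' hz), cpow_def_of_ne_zero hr', cpow_def_of_ne_zero hz,
    log_ofReal_mul hr hz, ofReal_log hr.le, add_mul, exp_add]

theorem analyticAt_add_natCast_cpow_neg {x : ℂ × ℂ} (hx : x.1 ∈ slitPlane) (n : ℕ) :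
    AnalyticAt ℂ (fun y : ℂ × ℂ => (y.1 + n) ^ (-y.2)) x :=
  (analyticAt_fst.add analyticAt_const).cpow analyticAt_snd.neg (add_natCast_mem_slitPlane hx n)

-- `w + n = (n + 1) (1 + t (w - 1))` with `t = 1 / (n + 1)`, and the slit plane is star-shaped about
-- `1`, so the second factor stays in a compact set while `n` varies.
theorem exists_norm_add_natCast_cpow_neg_le {K : Set (ℂ × ℂ)} (hK : IsCompact K)
    (hslit : ∀ x ∈ K, x.1 ∈ slitPlane) {σ : ℝ} (hσ : ∀ x ∈ K, σ ≤ x.2.re) :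
    ∃ C : ℝ, ∀ n : ℕ, ∀ x ∈ K, ‖(x.1 + n) ^ (-x.2)‖ ≤ ((n + 1 : ℕ) : ℝ) ^ (-σ) * C := by
  have hseg : ∀ x ∈ K, ∀ t ∈ Icc (0 : ℝ) 1, 1 + t * (x.1 - 1) ∈ slitPlane := fun x hx t ht => by
    simpa using starConvex_one_slitPlane.add_smul_sub_mem (hslit x hx) ht.1 ht.2
  obtain ⟨C, hC⟩ := ((isCompact_Icc (a := (0 : ℝ)) (b := 1)).prod hK).exists_bound_of_continuousOn
    (f := fun y : ℝ × ℂ × ℂ => (1 + y.1 * (y.2.1 - 1)) ^ (-y.2.2))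
    (ContinuousOn.cpow (by fun_prop) (by fun_prop) fun y hy => hseg y.2 hy.2 y.1 hy.1)
  refine ⟨C, fun n x hx => ?_⟩
  have hn : (0 : ℝ) < (n + 1 : ℕ) := by positivity
  have ht : ((n + 1 : ℕ) : ℝ)⁻¹ ∈ Icc (0 : ℝ) 1 :=
    ⟨by positivity, inv_le_one_of_one_le₀ (by exact_mod_cast Nat.le_add_left 1 n)⟩
  have hfactor : x.1 + n =
      ((n + 1 : ℕ) : ℝ) * (1 + (((n + 1 : ℕ) : ℝ)⁻¹ : ℝ) * (x.1 - 1)) := by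
    push_cast
    field_simp [n.cast_add_one_ne_zero (R := ℂ)]
    ring
  rw [hfactor, ofReal_mul_cpow hn (slitPlane_ne_zero (hseg x hx _ ht)), norm_mul,
    norm_cpow_eq_rpow_re_of_pos hn, neg_re]
  gcongr
  · exact_mod_cast Nat.le_add_left 1 n
  · exact hσ x hx
  · exact hC (_, x) ⟨ht, hx⟩

/-- The Lerch series `∑ lⁿ (w + n)⁻ˢ` as a function of the pair `(w, s)`. -/
noncomputable def lerch (l : ℂ) (x : ℂ × ℂ) : ℂ :=
  ∑' n : ℕ, l ^ n * (x.1 + n) ^ (-x.2)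

variable {l : ℂ}

theorem exists_summable_norm_lerch_term_le (hl : ‖l‖ ≤ 1) {K : Set (ℂ × ℂ)}
    (hKU : K ⊆ slitHalfSpace 1) (hK : IsCompact K) :
    ∃ u : ℕ → ℝ, Summable u ∧ ∀ n : ℕ, ∀ x ∈ K, ‖l ^ n * (x.1 + n) ^ (-x.2)‖ ≤ u n := by
  obtain ⟨σ, hσ1, hσ⟩ := hK.exists_forall_le' (f := fun x : ℂ × ℂ => x.2.re) (by fun_prop)
    fun x hx => (hKU hx).2
  obtain ⟨C, hC⟩ := exists_norm_add_natCast_cpow_neg_le hK (fun x hx => (hKU hx).1) hσ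
  refine ⟨fun n => ((n + 1 : ℕ) : ℝ) ^ (-σ) * C, ?_, fun n x hx => ?_⟩
  · exact ((summable_nat_add_iff 1).2 (Real.summable_nat_rpow.2 (neg_lt_neg hσ1))).mul_right C
  · rw [norm_mul, norm_pow]
    exact (mul_le_of_le_one_left (norm_nonneg _) (pow_le_one₀ (norm_nonneg _) hl)).trans (hC n x hx)

theorem summable_lerch_term (hl : ‖l‖ ≤ 1) {w s : ℂ} (hw : w ∈ slitPlane) (hs : 1 < s.re) :
    Summable fun n : ℕ => l ^ n * (w + n) ^ (-s) := by
  obtain ⟨u, hu, hle⟩ := exists_summable_norm_lerch_term_le hl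
    (singleton_subset_iff.2 (show (w, s) ∈ slitHalfSpace 1 from ⟨hw, hs⟩)) isCompact_singleton
  exact hu.of_norm_bounded fun n => hle n _ rfl

theorem analyticOnNhd_lerch (hl : ‖l‖ ≤ 1) : AnalyticOnNhd ℂ (lerch l) (slitHalfSpace 1) := by
  refine analyticOnNhd_tsum (isOpen_slitHalfSpace 1) (fun n x hx => ?_)
    (SummableLocallyUniformlyOn_of_locally_bounded (isOpen_slitHalfSpace 1) fun K hKU hK =>
      exists_summable_norm_lerch_term_le hl hKU hK)
  exact (analyticAt_const.mul
    (analyticAt_add_natCast_cpow_neg hx.1 n)).differentiableAt.differentiableWithinAt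

theorem hasDerivAt_lerch (hl : ‖l‖ ≤ 1) {w s : ℂ} (hw : w ∈ slitPlane) (hs : 1 < s.re) :
    HasDerivAt (fun w => lerch l (w, s)) (-s * lerch l (w, s + 1)) w := by
  have hdiff : DifferentiableAt ℂ (fun w => lerch l (w, s)) w :=
    (analyticOnNhd_lerch hl (w, s) ⟨hw, hs⟩).differentiableAt.fun_comp' w (by fun_prop)
  have hterm : ∀ n : ℕ, ∀ v ∈ slitPlane,
      HasDerivAt (fun v : ℂ => l ^ n * (v + n) ^ (-s)) (-s * (l ^ n * (v + n) ^ (-(s + 1)))) v :=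
    fun n v hv => by
      convert! (((hasDerivAt_id v).add_const (n : ℂ)).cpow_const (c := -s)
        (add_natCast_mem_slitPlane hv n)).const_mul (l ^ n) using 1
      rw [neg_add']
      simp only [id_eq]
      ring
  have hsum : SummableLocallyUniformlyOn (fun (n : ℕ) (v : ℂ) => l ^ n * (v + n) ^ (-s))
      slitPlane := by
    refine SummableLocallyUniformlyOn_of_locally_bounded isOpen_slitPlane fun K hKU hK => ?_
    obtain ⟨u, hu, hle⟩ := exists_summable_norm_lerch_term_le hl
      (prod_mono hKU (singleton_subset_iff.2 hs)) (hK.prod isCompact_singleton)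
    exact ⟨u, hu, fun n v hv => hle n (v, s) ⟨hv, rfl⟩⟩
  have hderiv := hasSum_deriv_of_summableLocallyUniformlyOn isOpen_slitPlane
    (fun n v hv => (hterm n v hv).differentiableAt.differentiableWithinAt) hsum hw
  simp only [(hterm _ w hw).deriv] at hderiv
  convert! hdiff.hasDerivAt using 1
  rw [lerch, ← tsum_mul_left]
  exact hderiv.tsum_eq

theorem lerch_eq_add_lerch_add_one (hl : ‖l‖ ≤ 1) {w s : ℂ} (hw : w ∈ slitPlane)
    (hs : 1 < s.re) : lerch l (w, s) = w ^ (-s) + l * lerch l (w + 1, s) := by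
  rw [lerch, (summable_lerch_term hl hw hs).tsum_eq_zero_add, lerch, ← tsum_mul_left]
  simp [pow_succ', mul_assoc, add_assoc, add_comm (1 : ℂ)]

theorem hasDerivAt_lerch_add_ofReal (hl : ‖l‖ ≤ 1) {w s : ℂ} (hw : w ∈ slitPlane)
    (hs : 1 < s.re) {t : ℝ} (ht : 0 ≤ t) :
    HasDerivAt (fun t : ℝ => lerch l (w + t, s)) (-s * lerch l (w + t, s + 1)) t := by
  have h := hasDerivAt_lerch hl (add_ofReal_mem_slitPlane hw ht) hs
  simpa using (h.comp_const_add w (t : ℂ)).comp_ofReal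

theorem continuousOn_lerch_add_ofReal (hl : ‖l‖ ≤ 1) {w s : ℂ} (hw : w ∈ slitPlane)
    (hs : 1 < s.re) : ContinuousOn (fun t : ℝ => lerch l (w + t, s)) (uIcc 0 1) := fun t ht => by
  rw [uIcc_of_le zero_le_one] at ht
  exact (hasDerivAt_lerch_add_ofReal hl hw hs ht.1).continuousAt.continuousWithinAt

theorem mul_integral_lerch_add_one (hl : ‖l‖ ≤ 1) {w s : ℂ} (hw : w ∈ slitPlane)
    (hs : 1 < s.re) :
    s * ∫ t in (0 : ℝ)..1, lerch l (w + t, s + 1) = lerch l (w, s) - lerch l (w + 1, s) := by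
  have hs' : 1 < (s + 1).re := by simp only [add_re, one_re]; linarith
  have hFTC := intervalIntegral.integral_eq_sub_of_hasDerivAt (a := 0) (b := 1)
    (fun t ht => hasDerivAt_lerch_add_ofReal hl hw hs (t := t)
      (by rw [uIcc_of_le zero_le_one] at ht; exact ht.1))
    ((continuousOn_lerch_add_ofReal hl hw hs').const_mul (-s)).intervalIntegrable
  rw [intervalIntegral.integral_const_mul] at hFTC
  simp only [ofReal_zero, ofReal_one, add_zero] at hFTC
  linear_combination -hFTC

theorem one_sub_mul_lerch (hl : ‖l‖ ≤ 1) {w s : ℂ} (hw : w ∈ slitPlane) (hs : 1 < s.re) :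
    (1 - l) * lerch l (w, s) =
      w ^ (-s) - l * (s * ∫ t in (0 : ℝ)..1, lerch l (w + t, s + 1)) := by
  linear_combination lerch_eq_add_lerch_add_one hl hw hs + l * mul_integral_lerch_add_one hl hw hs

theorem isPreconnected_slitHalfSpace (b : ℝ) : IsPreconnected (slitHalfSpace b) :=
  (starConvex_one_slitPlane.isPathConnected one_mem_slitPlane).isConnected.isPreconnected.prod
    (convex_halfSpace_re_gt b).isPreconnected

theorem analyticOnNhd_integral_lerch (hl : ‖l‖ ≤ 1) :
    AnalyticOnNhd ℂ (fun x : ℂ × ℂ => ∫ t in (0 : ℝ)..1, lerch l (x.1 + t, x.2))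
      (slitHalfSpace 1) := by
  have hmaps : MapsTo (fun y : (ℂ × ℂ) × ℝ => (y.1.1 + y.2, y.1.2)) (slitHalfSpace 1 ×ˢ Icc 0 1)
      (slitHalfSpace 1) := fun y hy => ⟨add_ofReal_mem_slitPlane hy.1.1 hy.2.1, hy.1.2⟩
  have hlerch := analyticOnNhd_lerch hl
  exact analyticOnNhd_intervalIntegral (f := fun x t => lerch l (x.1 + t, x.2))
    (isOpen_slitHalfSpace 1) zero_le_one (hlerch.continuousOn.comp (by fun_prop) hmaps)
    fun t ht => hlerch.differentiableOn.comp (f := fun x : ℂ × ℂ => (x.1 + (t : ℂ), x.2))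
      (by fun_prop) fun x hx => hmaps (x := (x, t)) ⟨hx, ht⟩

-- For `2 < Re s` the series `lerch 1 (·, s - 1)` converges and is, up to the factor `1 - s`, a
-- primitive of the integrand; analytic continuation lowers the bound on `Re s`.
theorem sub_one_mul_integral_lerch_one {w s : ℂ} (hw : w ∈ slitPlane) (hs : 1 < s.re) :
    (s - 1) * ∫ t in (0 : ℝ)..1, lerch 1 (w + t, s) = w ^ (1 - s) := by
  have hl : ‖(1 : ℂ)‖ ≤ 1 := norm_one.le
  have hleft : AnalyticOnNhd ℂ
      (fun x : ℂ × ℂ => (x.2 - 1) * ∫ t in (0 : ℝ)..1, lerch 1 (x.1 + t, x.2))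
      (slitHalfSpace 1) := fun x hx =>
    (analyticAt_snd.sub analyticAt_const).mul (analyticOnNhd_integral_lerch hl x hx)
  have hright : AnalyticOnNhd ℂ (fun x : ℂ × ℂ => x.1 ^ (1 - x.2)) (slitHalfSpace 1) :=
    fun x hx => analyticAt_fst.cpow (analyticAt_const.sub analyticAt_snd) hx.1
  have heq : ∀ x ∈ slitHalfSpace 2,
      (x.2 - 1) * ∫ t in (0 : ℝ)..1, lerch 1 (x.1 + t, x.2) = x.1 ^ (1 - x.2) := fun x hx => by
    have hre : 1 < (x.2 - 1).re := by
      have : 2 < x.2.re := hx.2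
      simp only [sub_re, one_re]
      linarith
    have h := mul_integral_lerch_add_one hl hx.1 hre
    rw [sub_add_cancel] at h
    rw [h, lerch_eq_add_lerch_add_one hl hx.1 hre, one_mul, add_sub_cancel_right, neg_sub]
  have hmem : ((1, 3) : ℂ × ℂ) ∈ slitHalfSpace 2 := ⟨one_mem_slitPlane, by norm_num⟩
  exact hleft.eqOn_of_preconnected_of_eventuallyEq hright (isPreconnected_slitHalfSpace 1)
    (antitone_slitHalfSpace one_le_two hmem)
    (eventually_of_mem ((isOpen_slitHalfSpace 2).mem_nhds hmem) heq) (x := (w, s)) ⟨hw, hs⟩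

theorem sub_one_mul_lerch_one {w s : ℂ} (hw : w ∈ slitPlane) (hs : 1 < s.re) :
    (s - 1) * lerch 1 (w, s) = w ^ (1 - s) +
      (s - 1) * ∫ t in (0 : ℝ)..1, (1 - t) * (s * lerch 1 (w + t, s + 1)) := by
  have hs' : 1 < (s + 1).re := by simp only [add_re, one_re]; linarith
  have hl : ‖(1 : ℂ)‖ ≤ 1 := by simp
  have hparts := intervalIntegral.integral_mul_deriv_eq_deriv_mul (a := 0) (b := 1)
    (u := fun t : ℝ => (1 - t : ℂ)) (u' := fun _ => -1)
    (fun t _ => by simpa using ((hasDerivAt_id (t : ℂ)).const_sub 1).comp_ofReal)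
    (fun t ht => hasDerivAt_lerch_add_ofReal hl hw hs (t := t)
      (by rw [uIcc_of_le zero_le_one] at ht; exact ht.1))
    intervalIntegrable_const
    ((continuousOn_lerch_add_ofReal hl hw hs').const_mul (-s)).intervalIntegrable
  simp only [neg_mul, mul_neg, one_mul, intervalIntegral.integral_neg, ofReal_one, ofReal_zero,
    sub_self, zero_mul, sub_zero, add_zero, zero_sub] at hparts
  linear_combination sub_one_mul_integral_lerch_one hw hs + (s - 1) * hparts

open Classical in
theorem exists_analyticOnNhd_sub_one_mul_lerch (hl : ‖l‖ ≤ 1) :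
    ∃ G : ℂ × ℂ → ℂ, AnalyticOnNhd ℂ G (slitPlane ×ˢ univ) ∧
      EqOn G (fun x => (x.2 - 1) * lerch l x) (slitHalfSpace 1) ∧
      ∀ w ∈ slitPlane, G (w, 1) = if l = 1 then 1 else 0 := by
  have hG₀ : AnalyticOnNhd ℂ (fun x : ℂ × ℂ => (x.2 - 1) * lerch l x) (slitHalfSpace 1) :=
    fun x hx => (analyticAt_snd.sub analyticAt_const).mul (analyticOnNhd_lerch hl x hx)
  by_cases h : l = 1
  · subst h
    obtain ⟨G, hG, hGeq, hG1⟩ := exists_analyticOnNhd_of_eqOn_unitShift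
      (A := fun x => x.1 ^ (1 - x.2)) (p := fun t => 1 - t)
      (fun x hx => analyticAt_fst.cpow (analyticAt_const.sub analyticAt_snd) hx.1) (by fun_prop) hG₀
      fun x hx => by
        simp only [unitShift, add_sub_cancel_right]
        exact (sub_one_mul_lerch_one hx.1 hx.2).symm
    exact ⟨G, hG, hGeq, fun w hw => by simp [hG1 w hw]⟩
  · have hne : 1 - l ≠ 0 := sub_ne_zero.2 (Ne.symm h)
    obtain ⟨G, hG, hGeq, hG1⟩ := exists_analyticOnNhd_of_eqOn_unitShift
      (A := fun x => (x.2 - 1) * x.1 ^ (-x.2) / (1 - l)) (p := fun _ => -l / (1 - l))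
      (fun x hx => ((analyticAt_snd.sub analyticAt_const).mul
        (analyticAt_fst.cpow analyticAt_snd.neg hx.1)).div_const) (by fun_prop) hG₀
      fun x hx => by
        simp only [unitShift, add_sub_cancel_right, intervalIntegral.integral_const_mul]
        field_simp
        linear_combination -(x.2 - 1) * one_sub_mul_lerch hl hx.1 hx.2
    exact ⟨G, hG, hGeq, fun w hw => by simp [hG1 w hw, h]⟩

end LerchSeries

section PeriodicZeta

theorem exp_two_pi_I_mul_eq_one_iff {b : ℂ} :
    exp (2 * Real.pi * I * b) = 1 ↔ ∃ m : ℤ, b = m := by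
  simp_rw [exp_eq_one_iff, mul_comm _ (2 * (Real.pi : ℂ) * I), mul_right_inj' two_pi_I_ne_zero]

theorem norm_exp_two_pi_I_mul_le_one {b : ℂ} (hb : 0 ≤ b.im) :
    ‖exp (2 * Real.pi * I * b)‖ ≤ 1 := by
  have hre : (2 * Real.pi * I * b).re = -(2 * Real.pi * b.im) := by simp
  rw [norm_exp, hre, Real.exp_le_one_iff, neg_nonpos]
  positivity

theorem natCast_mul_im_nonneg (k : ℕ) {b : ℂ} (hb : 0 ≤ b.im) : 0 ≤ (k * b).im := by
  simpa using mul_nonneg k.cast_nonneg hb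

theorem not_exists_nonpos_eq_iff_mem_slitPlane {w : ℂ} :
    (¬ ∃ x : ℝ, x ≤ 0 ∧ w = x) ↔ w ∈ slitPlane := by
  rw [mem_slitPlane_iff_not_le_zero, not_iff_not]
  constructor
  · rintro ⟨x, hx, rfl⟩
    exact ⟨hx, ofReal_im x⟩
  · exact fun h => ⟨w.re, h.1, Complex.ext rfl h.2⟩

variable {k : ℕ} [NeZero k]

theorem ofNat_add_mul (j : Fin k) (m : ℕ) : Fin.ofNat k (j + k * m) = j :=
  Fin.ext (by simp [Nat.mod_eq_of_lt j.2])

theorem hasSum_of_hasSum_residues {M : Type*} [AddCommMonoid M] [TopologicalSpace M]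
    [ContinuousAdd M] {f : ℕ → M} {c : Fin k → M}
    (h : ∀ j : Fin k, HasSum (fun m => f (j + k * m)) (c j)) : HasSum f (∑ j, c j) := by
  have hresidue : ∀ j : Fin k, HasSum (fun n => if j = Fin.ofNat k n then f n else 0) (c j) := by
    intro j
    have hinj : Function.Injective fun m : ℕ => (j + k * m : ℕ) := fun m m' hm =>
      Nat.eq_of_mul_eq_mul_left (NeZero.pos k) (Nat.add_left_cancel hm)
    refine (hinj.hasSum_iff fun n hn => if_neg ?_).1 ?_
    · rintro rfl
      exact hn ⟨n / k, by simpa using Nat.mod_add_div n k⟩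
    · simpa only [Function.comp_def, ofNat_add_mul, if_true] using h j
  simpa using hasSum_sum fun j (_ : j ∈ Finset.univ) => hresidue j

theorem div_natCast_mem_slitPlane {w : ℂ} (hw : w ∈ slitPlane) : w / k ∈ slitPlane := by
  have hk : (0 : ℝ) < k := Nat.cast_pos.2 (NeZero.pos k)
  rw [mem_slitPlane_iff] at hw ⊢
  rw [div_natCast_re, div_natCast_im]
  exact hw.imp (div_pos · hk) (div_ne_zero · hk.ne')

/-- The `k`-periodic Lerch–Lipschitz series `ζ_k(a, z, s)` as a function of `(z, s)`; the summation
index is shifted to start at `0`, so the residue `ι(n)` becomes `Fin.ofNat k n`. -/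
noncomputable def periodicZeta (a : Fin k → ℂ) (x : (Fin k → ℂ) × ℂ) : ℂ :=
  ∑' n : ℕ, exp (2 * Real.pi * I * (n + 1) * a (Fin.ofNat k n)) *
    (n + 1 + x.1 (Fin.ofNat k n)) ^ (-x.2)

theorem periodicZeta_term_eq {b w : ℂ} (s : ℂ) (j m : ℕ) (hw : j + 1 + w ∈ slitPlane) :
    exp (2 * Real.pi * I * ((j + k * m : ℕ) + 1) * b) * ((j + k * m : ℕ) + 1 + w) ^ (-s) =
      exp (2 * Real.pi * I * (j + 1) * b) * k ^ (-s) *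
        (exp (2 * Real.pi * I * (k * b)) ^ m * ((j + 1 + w) / k + m) ^ (-s)) := by
  have hexp : exp (2 * Real.pi * I * ((j + k * m : ℕ) + 1) * b) =
      exp (2 * Real.pi * I * (j + 1) * b) * exp (2 * Real.pi * I * (k * b)) ^ m := by
    rw [← exp_nat_mul, ← exp_add]
    push_cast
    ring_nf
  have hbase : ((j + k * m : ℕ) : ℂ) + 1 + w = (k : ℝ) * ((j + 1 + w) / k + m) := by
    have hk : (k : ℂ) ≠ 0 := NeZero.ne (k : ℂ)
    push_cast
    field_simp
    ring
  rw [hexp, hbase, ofReal_mul_cpow (Nat.cast_pos.2 (NeZero.pos k))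
    (slitPlane_ne_zero (add_natCast_mem_slitPlane (div_natCast_mem_slitPlane hw) m)),
    ofReal_natCast]
  ring

theorem periodicZeta_eq_sum_lerch {a : Fin k → ℂ} (ha : ∀ j, 0 ≤ (a j).im) {z : Fin k → ℂ}
    (hz : ∀ j : Fin k, (j : ℂ) + 1 + z j ∈ slitPlane) {s : ℂ} (hs : 1 < s.re) :
    periodicZeta a (z, s) = ∑ j : Fin k, exp (2 * Real.pi * I * (j + 1) * a j) * k ^ (-s) *
      lerch (exp (2 * Real.pi * I * (k * a j))) ((j + 1 + z j) / k, s) := by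
  refine (hasSum_of_hasSum_residues fun j => ?_).tsum_eq
  simp only [ofNat_add_mul, periodicZeta_term_eq s j _ (hz j)]
  exact (summable_lerch_term (norm_exp_two_pi_I_mul_le_one (natCast_mul_im_nonneg k (ha j)))
    (div_natCast_mem_slitPlane (hz j)) hs).hasSum.mul_left _

theorem analyticOnNhd_comp_div_natCast {g : ℂ × ℂ → ℂ}
    (hg : AnalyticOnNhd ℂ g (slitPlane ×ˢ univ)) (j : Fin k) :
    AnalyticOnNhd ℂ (fun x : (Fin k → ℂ) × ℂ => g (((j : ℂ) + 1 + x.1 j) / k, x.2))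
      ({z | ∀ j : Fin k, (j : ℂ) + 1 + z j ∈ slitPlane} ×ˢ univ) := fun x hx => by
  have hcoord : AnalyticAt ℂ (fun x : (Fin k → ℂ) × ℂ => x.1 j) x :=
    ((ContinuousLinearMap.proj (R := ℂ) (φ := fun _ : Fin k => ℂ) j).comp
      (ContinuousLinearMap.fst ℂ (Fin k → ℂ) ℂ)).analyticAt x
  have hpair : AnalyticAt ℂ
      (fun x : (Fin k → ℂ) × ℂ => ((((j : ℂ) + 1 + x.1 j) / k, x.2) : ℂ × ℂ)) x :=
    (analyticAt_const.add hcoord).div_const.prod analyticAt_snd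
  exact AnalyticAt.fun_comp (hg _ ⟨div_natCast_mem_slitPlane (hx.1 j), mem_univ _⟩) hpair

open Classical in
theorem zeta_k_analytic_in_z_and_s_simple_pole_general {a : Fin k → ℂ} (ha : ∀ j, 0 ≤ (a j).im) :
    ∃ G : (Fin k → ℂ) × ℂ → ℂ,
      AnalyticOnNhd ℂ G ({z | ∀ j : Fin k, (j : ℂ) + 1 + z j ∈ slitPlane} ×ˢ univ) ∧
      (∀ z : Fin k → ℂ, (∀ j : Fin k, (j : ℂ) + 1 + z j ∈ slitPlane) → ∀ s : ℂ, 1 < s.re →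
        G (z, s) = (s - 1) * periodicZeta a (z, s)) ∧
      ∀ z : Fin k → ℂ, (∀ j : Fin k, (j : ℂ) + 1 + z j ∈ slitPlane) →
        G (z, 1) = 1 / k * ∑ j : Fin k, if ∃ m : ℤ, k * a j = m then
          exp (2 * Real.pi * I * (j + 1) * a j) else 0 := by
  choose g hg hg_eq hg_one using fun j =>
    exists_analyticOnNhd_sub_one_mul_lerch
      (norm_exp_two_pi_I_mul_le_one (natCast_mul_im_nonneg k (ha j)))
  refine ⟨fun x => ∑ j : Fin k, exp (2 * Real.pi * I * (j + 1) * a j) * k ^ (-x.2) *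
    g j (((j : ℂ) + 1 + x.1 j) / k, x.2), fun x hx => ?_, fun z hz s hs => ?_, fun z hz => ?_⟩
  · have hpow : AnalyticAt ℂ (fun x : (Fin k → ℂ) × ℂ => (k : ℂ) ^ (-x.2)) x :=
      analyticAt_const.cpow analyticAt_snd.neg (natCast_mem_slitPlane.2 (NeZero.ne k))
    exact Finset.analyticAt_fun_sum _ fun j _ =>
      (analyticAt_const.mul hpow).mul (analyticOnNhd_comp_div_natCast (hg j) j x hx)
  · rw [periodicZeta_eq_sum_lerch ha hz hs, Finset.mul_sum]
    refine Finset.sum_congr rfl fun j _ => ?_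
    rw [hg_eq j (x := (((j : ℂ) + 1 + z j) / k, s)) ⟨div_natCast_mem_slitPlane (hz j), hs⟩]
    ring
  · rw [Finset.mul_sum]
    refine Finset.sum_congr rfl fun j _ => ?_
    simp only [hg_one j _ (div_natCast_mem_slitPlane (hz j)), exp_two_pi_I_mul_eq_one_iff,
      cpow_neg_one]
    split_ifs <;> ring

end PeriodicZeta

open Classical in
/-- If some `a j` lies in `ℤ[1/k]`, then `(s−1)·ζ_k(a, z, s)` extends to a function
`G(z, s)` analytic on `Ω × ℂ` (with `Ω` the set of `z` whose bases `(j+1) + z j` avoid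
the closed negative real axis), with `G(z, 1) = (1/k) ∑_{a_j ∈ ℤ[1/k]} e^{2πi j a_j}`
independent of `z`: the zeta function has a simple pole at `s = 1` with constant residue. -/
theorem zeta_k_analytic_in_z_and_s_simple_pole
    (k : ℕ) (hk : 0 < k)
    (a : Fin k → ℂ) (haIm : ∀ j, 0 ≤ (a j).im)
    (haZ : ∃ j : Fin k, ∃ m : ℤ, (k : ℂ) * a j = (m : ℂ)) :
    ∃ G : (Fin k → ℂ) × ℂ → ℂ,
      AnalyticOnNhd ℂ G
        ({z : Fin k → ℂ | ∀ j : Fin k,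
            ¬ ∃ x : ℝ, x ≤ 0 ∧ ((j : ℂ) + 1) + z j = (x : ℂ)} ×ˢ Set.univ) ∧
      (∀ z : Fin k → ℂ,
        (∀ j : Fin k, ¬ ∃ x : ℝ, x ≤ 0 ∧ ((j : ℂ) + 1) + z j = (x : ℂ)) →
        ∀ s : ℂ, 1 < s.re →
          G (z, s) = (s - 1) * ∑' n : ℕ,
            Complex.exp (2 * Real.pi * Complex.I * ((n : ℂ) + 1) *
                a ⟨n % k, Nat.mod_lt n hk⟩) *
              (((n : ℂ) + 1) + z ⟨n % k, Nat.mod_lt n hk⟩) ^ (-s)) ∧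
      ∀ z : Fin k → ℂ,
        (∀ j : Fin k, ¬ ∃ x : ℝ, x ≤ 0 ∧ ((j : ℂ) + 1) + z j = (x : ℂ)) →
        G (z, 1) = (1 / (k : ℂ)) * ∑ j : Fin k,
          if ∃ m : ℤ, (k : ℂ) * a j = (m : ℂ) then
            Complex.exp (2 * Real.pi * Complex.I * ((j : ℂ) + 1) * a j)
          else 0 := by
  have : NeZero k := ⟨hk.ne'⟩
  simp only [not_exists_nonpos_eq_iff_mem_slitPlane]
  exact zeta_k_analytic_in_z_and_s_simple_pole_general haIm
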